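/- For a symplectic alternating algebra L over a field 𝔽 and every m with 2 ≤ m ≤ 4, the m-th term of the lower central series does not have dimension 2: dim L^m ≠ 2. -/

import Mathlib

/-!
The expression `(u·v, w)` is an alternating trilinear form, so `(U·L)^⊥·L ⊆ U^⊥` for every
subspace `U`.

Suppose `dim L^{n+1} ≤ 2`. Then `L = ⟨a, b⟩ + (L^{n+1})^⊥` for some `a`, `b`, and multiplying out
gives `L² ⊆ ⟨a·b⟩ + (L^n)^⊥`. If moreover `a·b ⟂ L^n`, this reads `L² ⟂ L^n`, that is
`(w·x, y) = (x·y, w) = 0` for all `w ∈ L^n`, whence `L^{n+1} = 0` by nondegeneracy.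

It remains to see `a·b ⟂ L^n` for `n = 1, 2, 3`.
* `n = 1`: `a·b` is orthogonal to `a`, to `b` and to `(L²)^⊥`, which together span `L`.
* `n = 2`: `a·b` is orthogonal to itself and to `(L²)^⊥`, which together contain `L²`.
* `n = 3`: `L³ = L²·L ⊆ (a·b)·L + (L³)^⊥·L`, where `a·b ⟂ (a·b)·L` and
  `(L³)^⊥·L ⊆ (L²)^⊥`.
-/

variable {𝔽 : Type*} [Field 𝔽] {L : Type*} [AddCommGroup L] [Module 𝔽 L]

structure SymplecticAlternatingAlgebra (𝔽 L : Type*) [Field 𝔽] [AddCommGroup L]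
    [Module 𝔽 L] where
  form : L →ₗ[𝔽] L →ₗ[𝔽] 𝔽
  mul : L →ₗ[𝔽] L →ₗ[𝔽] L
  form_alt : ∀ x, form x x = 0
  form_nondeg : ∀ x, (∀ y, form x y = 0) → x = 0
  mul_alt : ∀ x, mul x x = 0
  compat : ∀ u v w, form (mul u v) w = form (mul v w) u

namespace SymplecticAlternatingAlgebra

variable (S : SymplecticAlternatingAlgebra 𝔽 L)

/-- `U·V`, the span of all products `u·v`. -/
def prodSub (U V : Submodule 𝔽 L) : Submodule 𝔽 L := Submodule.map₂ S.mul U V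

/-- An ideal: `I·L ⊆ I`. -/
def IsIdeal (I : Submodule 𝔽 L) : Prop := S.prodSub I ⊤ ≤ I

/-- Orthogonal complement with respect to the form. -/
def perp (U : Submodule 𝔽 L) : Submodule 𝔽 L where
  carrier := {x | ∀ u ∈ U, S.form x u = 0}
  add_mem' := by
    intro a b ha hb u hu
    simp [map_add, ha u hu, hb u hu]
  zero_mem' := by
    intro u hu
    simp
  smul_mem' := by
    intro c a ha u hu
    simp [ha u hu]

/-- `lcs n = L^(n+1)`: the lower central series, `lcs 0 = L¹ = L`. -/
def lcs : ℕ → Submodule 𝔽 L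
  | 0 => ⊤
  | n + 1 => S.prodSub (lcs n) ⊤

/-- `ucs n = Z_n(L)`: the upper central series. -/
def ucs : ℕ → Submodule 𝔽 L
  | 0 => ⊥
  | n + 1 => ⨅ y : L, (ucs n).comap (S.mul.flip y)

/-- The center `Z(L)`. -/
def center : Submodule 𝔽 L := ⨅ y : L, LinearMap.ker (S.mul.flip y)

/-- Nilpotency: some term of the lower central series vanishes. -/
def IsNilpotent : Prop := ∃ n, S.lcs n = ⊥

/-- `s` generates `L` as an algebra: the smallest subspace containing `s`
and closed under the multiplication is `L` itself. -/
def Generates (s : Set L) : Prop :=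
  ∀ M : Submodule 𝔽 L, s ⊆ (M : Set L) → S.prodSub M M ≤ M → M = ⊤

end SymplecticAlternatingAlgebra

open SymplecticAlternatingAlgebra Module


namespace SymplecticAlternatingAlgebra

open Submodule

lemma exists_span_pair_eq_of_finrank_le_two {K V : Type*} [DivisionRing K] [AddCommGroup V]
    [Module K V] {p : Submodule K V} [FiniteDimensional K p] (hp : finrank K p ≤ 2) :
    ∃ u v : V, span K {u, v} = p := by
  have e := finBasis K p
  generalize finrank K p = d at hp e
  have hspan : span K (p.subtype '' Set.range e) = p := by
    rw [span_image, e.span_eq, map_subtype_top]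
  rw [← Set.range_comp] at hspan
  interval_cases d
  · exact ⟨0, 0, by simpa using hspan⟩
  · exact ⟨e 0, e 0, by simpa [Set.range_unique] using hspan⟩
  · refine ⟨e 0, e 1, ?_⟩
    have hrange : Set.range (p.subtype ∘ e) = {(e 0 : V), (e 1 : V)} := by
      ext
      simp [Fin.exists_fin_two, eq_comm]
    rwa [hrange] at hspan

lemma exists_span_pair_sup_ker_eq_top {K V W : Type*} [DivisionRing K] [AddCommGroup V]
    [Module K V] [AddCommGroup W] [Module K W] (f : V →ₗ[K] W) [FiniteDimensional K f.range]
    (hf : finrank K f.range ≤ 2) : ∃ a b : V, span K {a, b} ⊔ f.ker = ⊤ := by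
  obtain ⟨u, v, huv⟩ := exists_span_pair_eq_of_finrank_le_two hf
  obtain ⟨a, rfl⟩ : u ∈ f.range := huv ▸ subset_span (by simp)
  obtain ⟨b, rfl⟩ : v ∈ f.range := huv ▸ subset_span (by simp)
  refine ⟨a, b, ?_⟩
  rw [← comap_map_eq, map_span, Set.image_pair, huv,
    LinearMap.range_eq_map, comap_map_eq, top_sup_eq]

variable (S : SymplecticAlternatingAlgebra 𝔽 L)

lemma form_isAlt : S.form.IsAlt := S.form_alt

lemma mul_isAlt : S.mul.IsAlt := S.mul_alt

lemma form_mul_self_right (x y : L) : S.form (S.mul x y) y = 0 := by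
  rw [S.compat, S.mul_alt, map_zero, LinearMap.zero_apply]

lemma form_mul_self_left (x y : L) : S.form (S.mul x y) x = 0 := by
  rw [← S.compat, S.mul_alt, map_zero, LinearMap.zero_apply]

lemma form_mul_left_comm (x y u : L) : S.form (S.mul x y) u = S.form x (S.mul u y) := by
  rw [S.compat, ← S.mul_isAlt.neg, map_neg, LinearMap.neg_apply, S.form_isAlt.neg]

lemma mul_mem_prodSub {U V : Submodule 𝔽 L} {u v : L} (hu : u ∈ U) (hv : v ∈ V) :
    S.mul u v ∈ S.prodSub U V :=
  apply_mem_map₂ _ hu hv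

lemma prodSub_comm (U V : Submodule 𝔽 L) : S.prodSub U V = S.prodSub V U := by
  have hle (A B : Submodule 𝔽 L) : S.prodSub A B ≤ S.prodSub B A :=
    map₂_le.2 fun x hx y hy => by
      rw [← S.mul_isAlt.neg]
      exact neg_mem (S.mul_mem_prodSub hy hx)
  exact (hle U V).antisymm (hle V U)

lemma prodSub_span_pair_le (a b : L) :
    S.prodSub (span 𝔽 {a, b}) (span 𝔽 {a, b}) ≤ span 𝔽 {S.mul a b} := by
  have hab : S.mul a b ∈ span 𝔽 {S.mul a b} := mem_span_singleton_self _
  have hba : S.mul b a ∈ span 𝔽 {S.mul a b} := S.mul_isAlt.neg a b ▸ neg_mem hab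
  rw [prodSub, map₂_span_span, span_le]
  rintro _ ⟨x, rfl | rfl, y, rfl | rfl, rfl⟩
  · simp [S.mul_alt]
  · exact hab
  · exact hba
  · simp [S.mul_alt]

lemma prodSub_top_top_le_span_mul_sup {V : Submodule 𝔽 L} {a b : L} (hab : span 𝔽 {a, b} ⊔ V = ⊤) :
    S.prodSub ⊤ ⊤ ≤ span 𝔽 {S.mul a b} ⊔ S.prodSub V ⊤ := by
  set A := span 𝔽 {a, b}
  have hA : S.prodSub A ⊤ ≤ span 𝔽 {S.mul a b} ⊔ S.prodSub V ⊤ :=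
    calc S.prodSub A ⊤ = S.prodSub A A ⊔ S.prodSub V A := by
          rw [← hab, prodSub, map₂_sup_right, ← prodSub, ← prodSub, S.prodSub_comm A V]
      _ ≤ span 𝔽 {S.mul a b} ⊔ S.prodSub V ⊤ :=
          sup_le_sup (S.prodSub_span_pair_le a b) (map₂_le_map₂_right le_top)
  calc S.prodSub ⊤ ⊤ = S.prodSub A ⊤ ⊔ S.prodSub V ⊤ := by
        rw [prodSub, prodSub, prodSub, ← map₂_sup_left, hab]
    _ ≤ span 𝔽 {S.mul a b} ⊔ S.prodSub V ⊤ := sup_le hA le_sup_right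

lemma perp_antitone : Antitone S.perp := fun _ _ hUW _ hx u hu => hx u (hUW hu)

lemma le_perp_comm {U W : Submodule 𝔽 L} : U ≤ S.perp W ↔ W ≤ S.perp U :=
  ⟨fun h w hw _ hu => S.form_isAlt.eq_iff.1 (h hu w hw),
    fun h u hu _ hw => S.form_isAlt.eq_iff.1 (h hw u hu)⟩

lemma mem_perp_span_singleton {x p : L} : x ∈ S.perp (span 𝔽 {p}) ↔ S.form x p = 0 := by
  refine ⟨fun h => h p (mem_span_singleton_self p), fun h u hu => ?_⟩
  obtain ⟨c, rfl⟩ := mem_span_singleton.1 hu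
  rw [map_smul, h, smul_zero]

lemma ker_dualRestrict_comp_form (U : Submodule 𝔽 L) :
    (U.dualRestrict ∘ₗ S.form).ker = S.perp U := by
  ext x
  exact ⟨fun h u hu => LinearMap.congr_fun h ⟨u, hu⟩, fun h => LinearMap.ext fun u => h u u.2⟩

lemma exists_span_pair_sup_perp_eq_top {U : Submodule 𝔽 L} (hU : Module.rank 𝔽 U ≤ 2) :
    ∃ a b : L, span 𝔽 {a, b} ⊔ S.perp U = ⊤ := by
  have : FiniteDimensional 𝔽 U :=
    Module.rank_lt_aleph0_iff.1 (hU.trans_lt (Cardinal.natCast_lt_aleph0 (n := 2)))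
  rw [← S.ker_dualRestrict_comp_form U]
  refine exists_span_pair_sup_ker_eq_top _ ?_
  calc finrank 𝔽 (U.dualRestrict ∘ₗ S.form).range ≤ finrank 𝔽 (Dual 𝔽 U) := finrank_le _
    _ = finrank 𝔽 U := Subspace.dual_finrank_eq
    _ ≤ 2 := finrank_le_of_rank_le hU

lemma prodSub_perp_prodSub_le (U W : Submodule 𝔽 L) :
    S.prodSub (S.perp (S.prodSub U W)) W ≤ S.perp U :=
  map₂_le.2 fun x hx y hy u hu => by
    rw [S.form_mul_left_comm]
    exact hx _ (S.mul_mem_prodSub hu hy)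

lemma prodSub_top_eq_bot_of_le_perp {U : Submodule 𝔽 L} (hU : S.prodSub ⊤ ⊤ ≤ S.perp U) :
    S.prodSub U ⊤ = ⊥ := by
  refine le_bot_iff.1 (map₂_le.2 fun w hw x _ => (mem_bot 𝔽).2 (S.form_nondeg _ fun y => ?_))
  rw [S.compat]
  exact hU (S.mul_mem_prodSub mem_top mem_top) w hw

variable {S} {a b : L} {n : ℕ}

lemma lcs_one_le_span_mul_sup_perp (hab : span 𝔽 {a, b} ⊔ S.perp (S.lcs (n + 1)) = ⊤) :
    S.lcs 1 ≤ span 𝔽 {S.mul a b} ⊔ S.perp (S.lcs n) :=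
  (S.prodSub_top_top_le_span_mul_sup hab).trans (sup_le_sup_left (S.prodSub_perp_prodSub_le _ _) _)

lemma lcs_succ_eq_bot_of_le_perp_mul (hab : span 𝔽 {a, b} ⊔ S.perp (S.lcs (n + 1)) = ⊤)
    (hn : S.lcs n ≤ S.perp (span 𝔽 {S.mul a b})) : S.lcs (n + 1) = ⊥ := by
  have hsq : S.lcs 1 ≤ S.perp (S.lcs n) :=
    (lcs_one_le_span_mul_sup_perp hab).trans (sup_le (S.le_perp_comm.1 hn) le_rfl)
  exact S.prodSub_top_eq_bot_of_le_perp hsq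

variable (S a b) in
lemma perp_lcs_one_le_perp_mul : S.perp (S.lcs 1) ≤ S.perp (span 𝔽 {S.mul a b}) :=
  S.perp_antitone <| (span_singleton_le_iff_mem _ _).2 (S.mul_mem_prodSub mem_top mem_top)

lemma lcs_zero_le_perp_mul (hab : span 𝔽 {a, b} ⊔ S.perp (S.lcs 1) = ⊤) :
    S.lcs 0 ≤ S.perp (span 𝔽 {S.mul a b}) := by
  have hspan : span 𝔽 {a, b} ≤ S.perp (span 𝔽 {S.mul a b}) := by
    rw [span_le, Set.pair_subset_iff]
    exact ⟨S.mem_perp_span_singleton.2 (S.form_isAlt.eq_iff.1 (S.form_mul_self_left a b)),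
      S.mem_perp_span_singleton.2 (S.form_isAlt.eq_iff.1 (S.form_mul_self_right a b))⟩
  exact hab.ge.trans (sup_le hspan (S.perp_lcs_one_le_perp_mul a b))

lemma lcs_one_le_perp_mul (hab : span 𝔽 {a, b} ⊔ S.perp (S.lcs 2) = ⊤) :
    S.lcs 1 ≤ S.perp (span 𝔽 {S.mul a b}) := by
  have hself : span 𝔽 {S.mul a b} ≤ S.perp (span 𝔽 {S.mul a b}) :=
    (span_singleton_le_iff_mem _ _).2 (S.mem_perp_span_singleton.2 (S.form_alt _))
  exact (lcs_one_le_span_mul_sup_perp hab).trans (sup_le hself (S.perp_lcs_one_le_perp_mul a b))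

lemma lcs_two_le_perp_mul (hab : span 𝔽 {a, b} ⊔ S.perp (S.lcs 3) = ⊤) :
    S.lcs 2 ≤ S.perp (span 𝔽 {S.mul a b}) := by
  have hmul : S.prodSub (span 𝔽 {S.mul a b}) ⊤ ≤ S.perp (span 𝔽 {S.mul a b}) :=
    map₂_le.2 fun p hp y _ => by
      obtain ⟨c, rfl⟩ := mem_span_singleton.1 hp
      rw [map_smul, LinearMap.smul_apply]
      exact smul_mem _ c (S.mem_perp_span_singleton.2 (S.form_mul_self_left _ y))
  calc S.lcs 2 ≤ S.prodSub (span 𝔽 {S.mul a b} ⊔ S.perp (S.lcs 2)) ⊤ :=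
        map₂_le_map₂_left (lcs_one_le_span_mul_sup_perp hab)
    _ = S.prodSub (span 𝔽 {S.mul a b}) ⊤ ⊔ S.prodSub (S.perp (S.lcs 2)) ⊤ := map₂_sup_left ..
    _ ≤ S.perp (span 𝔽 {S.mul a b}) :=
        sup_le hmul ((S.prodSub_perp_prodSub_le _ _).trans (S.perp_lcs_one_le_perp_mul a b))

end SymplecticAlternatingAlgebra

theorem lcs_finrank_ne_two_general (S : SymplecticAlternatingAlgebra 𝔽 L) {n : ℕ} (h1 : 1 ≤ n)
    (h3 : n ≤ 3) (hrank : Module.rank 𝔽 (S.lcs n) ≤ 2) : S.lcs n = ⊥ := by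
  obtain ⟨a, b, hab⟩ := S.exists_span_pair_sup_perp_eq_top hrank
  obtain rfl | rfl | rfl : n = 1 ∨ n = 2 ∨ n = 3 := by omega
  · exact lcs_succ_eq_bot_of_le_perp_mul hab (lcs_zero_le_perp_mul hab)
  · exact lcs_succ_eq_bot_of_le_perp_mul hab (lcs_one_le_perp_mul hab)
  · exact lcs_succ_eq_bot_of_le_perp_mul hab (lcs_two_le_perp_mul hab)

theorem lcs_finrank_ne_two [FiniteDimensional 𝔽 L]
    (S : SymplecticAlternatingAlgebra 𝔽 L) :
    ∀ m : ℕ, 2 ≤ m → m ≤ 4 → Module.finrank 𝔽 (S.lcs (m - 1)) ≠ 2 := by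
  intro m h2 h4 hdim
  have hbot : S.lcs (m - 1) = ⊥ := lcs_finrank_ne_two_general S (by omega) (by omega)
    ((rank_eq_ofNat_iff_finrank_eq_ofNat 2).2 hdim).le
  rw [hbot, finrank_bot] at hdim
  omega
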